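/- arXiv:1503.07479 — 5 statements merged into one kernel-verified Lean document; each statement's English description precedes it below -/
import Mathlib

section
/- Assume (H1), (H3) and (H4). Then for every u ∈ X∖{0}, the fiber map γ_u(t) = Φ(tu), defined for t > 0, attains a positive global maximum at a unique point t_u > 0, and t_u is the unique critical point of γ_u on (0,∞); in particular, the ray {tu : t > 0} intersects the Nehari manifold N exactly at the point t_u u. -/
/-!
For `u ≠ 0` put `g t = Φ (t • u)`, so `g' t = Φ'(t • u) u`. By (H1), `g' > 0` near `0⁺`; were `g'`
positive on all of `(0, ∞)`, then `g ≥ g 0 = 0` there, against (H3) for the compact set `{u}`. The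
intermediate value theorem therefore gives a zero `c` of `g'`. As `g' t / t ^ (p - 1)` is strictly
decreasing, `g'` is positive before `c` and negative after it, so `g` increases strictly on
`[0, c]` and decreases strictly on `[c, ∞)`.
-/

open Filter Topology

/-- Under (H1), (H3), (H4), each fiber map `γ_u(t) = Φ(tu)` (for `u ≠ 0`, `t > 0`)
attains a positive global maximum at a unique point `t_u > 0`, which is its unique
critical point; the ray `{tu : t > 0}` meets the Nehari manifold exactly at `t_u • u`. -/
theorem fiber_map_unique_max
    {X : Type*} [NormedAddCommGroup X] [NormedSpace ℝ X] [CompleteSpace X]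
    (hrefl : Function.Surjective (NormedSpace.inclusionInDoubleDual ℝ X))
    (hnorm : ContDiffOn ℝ 1 (fun x : X => ‖x‖) {(0 : X)}ᶜ)
    (Φ : X → ℝ) (hΦ : ContDiff ℝ 1 Φ) (hΦ0 : Φ 0 = 0)
    (p r : ℝ) (hp : 1 < p) (hr : 1 < r)
    -- (H1)
    (H1 : ∃ ε > (0 : ℝ), ∃ δ > (0 : ℝ), ∀ u : X, u ≠ 0 → ‖u‖ < δ →
      ε ≤ fderiv ℝ Φ u u / ‖u‖ ^ r)
    -- (H3)
    (H3 : ∀ K : Set X, (0 : X) ∉ K → IsCompact (toWeakSpace ℝ X '' K) →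
      ∀ M : ℝ, ∃ T : ℝ, ∀ t ≥ T, ∀ u ∈ K, Φ (t • u) / t ^ p ≤ -M)
    -- (H4)
    (H4 : ∀ u : X, u ≠ 0 →
      StrictAntiOn (fun t : ℝ => fderiv ℝ Φ (t • u) u / t ^ (p - 1)) (Set.Ioi 0) ∧
      StrictMonoOn (fun t : ℝ => Φ (t • u) - (1 / p) * fderiv ℝ Φ (t • u) (t • u))
        (Set.Ioi 0)) :
    ∀ u : X, u ≠ 0 → ∃ tu : ℝ, 0 < tu ∧
      0 < Φ (tu • u) ∧
      (∀ t : ℝ, 0 < t → t ≠ tu → Φ (t • u) < Φ (tu • u)) ∧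
      (∀ t : ℝ, 0 < t → (deriv (fun s : ℝ => Φ (s • u)) t = 0 ↔ t = tu)) ∧
      (∀ t : ℝ, 0 < t →
        ((t • u ≠ 0 ∧ fderiv ℝ Φ (t • u) (t • u) = 0) ↔ t = tu)) := by
  intro u hu
  obtain ⟨hanti, -⟩ := H4 u hu
  set g : ℝ → ℝ := fun s => Φ (s • u) with hg
  set d : ℝ → ℝ := fun s => fderiv ℝ Φ (s • u) u with hd
  have hderiv : ∀ t, HasDerivAt g (d t) t := fun t => by
    have h1 : HasDerivAt (fun s : ℝ => s • u) u t := by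
      simpa using (hasDerivAt_id t).smul_const u
    exact ((hΦ.differentiable one_ne_zero) (t • u)).hasFDerivAt.comp_hasDerivAt t h1
  have hgc : Continuous g := continuous_iff_continuousAt.2 fun t => (hderiv t).continuousAt
  have hdc : Continuous d :=
    ((hΦ.continuous_fderiv one_ne_zero).comp (continuous_id.smul continuous_const)).clm_apply
      continuous_const
  have hg0 : g 0 = 0 := by simp [hg, hΦ0]
  have hun : 0 < ‖u‖ := norm_pos_iff.2 hu
  obtain ⟨a, ha, hda⟩ : ∃ a > 0, 0 < d a := by
    obtain ⟨ε, hε, δ, hδ, h⟩ := H1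
    have ha : 0 < δ / 2 / ‖u‖ := by positivity
    refine ⟨δ / 2 / ‖u‖, ha, ?_⟩
    have hne : (δ / 2 / ‖u‖) • u ≠ 0 := smul_ne_zero ha.ne' hu
    have hno : ‖(δ / 2 / ‖u‖) • u‖ = δ / 2 := by
      rw [norm_smul, Real.norm_of_nonneg ha.le]
      field_simp
    have h2 := hε.trans_le (h _ hne (by rw [hno]; linarith))
    rw [hno, map_smul, smul_eq_mul] at h2
    have h3 := (div_pos_iff_of_pos_right (Real.rpow_pos_of_pos (half_pos hδ) r)).1 h2
    exact (mul_pos_iff_of_pos_left ha).1 h3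
  obtain ⟨b, hb, hdb⟩ : ∃ b > 0, d b ≤ 0 := by
    by_contra! hpos
    have hmono : StrictMonoOn g (Set.Ici 0) :=
      strictMonoOn_of_deriv_pos (convex_Ici 0) hgc.continuousOn fun t ht => by
        rw [interior_Ici] at ht
        rw [(hderiv t).deriv]
        exact hpos t ht
    obtain ⟨T, hT⟩ := H3 {u} (fun h => hu (Set.mem_singleton_iff.1 h).symm)
      (by rw [Set.image_singleton]; exact isCompact_singleton) 1
    have h1 := hT (max T 1) (le_max_left _ _) u rfl
    have hs : (0 : ℝ) < max T 1 := lt_max_of_lt_right one_pos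
    have h2 : g 0 < g (max T 1) := hmono Set.self_mem_Ici hs.le hs
    rw [hg0] at h2
    have h3 : 0 < Φ (max T 1 • u) / max T 1 ^ p := div_pos h2 (Real.rpow_pos_of_pos hs p)
    linarith
  obtain ⟨c, hc, hdc0⟩ : ∃ c > 0, d c = 0 := by
    obtain ⟨c, hc, h⟩ := isPreconnected_Ioi.intermediate_value (s := Set.Ioi (0 : ℝ)) hb ha
      hdc.continuousOn ⟨hdb, hda.le⟩
    exact ⟨c, hc, h⟩
  have hbefore : ∀ t, 0 < t → t < c → 0 < d t := fun t ht htc => by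
    have h : d c / c ^ (p - 1) < d t / t ^ (p - 1) := hanti ht hc htc
    rw [hdc0, zero_div] at h
    exact (div_pos_iff_of_pos_right (Real.rpow_pos_of_pos ht _)).1 h
  have hafter : ∀ t, c < t → d t < 0 := fun t htc => by
    have ht : 0 < t := lt_trans hc htc
    have h : d t / t ^ (p - 1) < d c / c ^ (p - 1) := hanti hc ht htc
    rw [hdc0, zero_div] at h
    by_contra! hn
    exact absurd h (not_lt.2 (div_nonneg hn (Real.rpow_pos_of_pos ht _).le))
  have hzero : ∀ t, 0 < t → (d t = 0 ↔ t = c) := fun t ht => by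
    refine ⟨fun h => ?_, fun h => h ▸ hdc0⟩
    rcases lt_trichotomy t c with h1 | h1 | h1
    · exact absurd h (hbefore t ht h1).ne'
    · exact h1
    · exact absurd h (hafter t h1).ne
  have hmono : StrictMonoOn g (Set.Icc 0 c) :=
    strictMonoOn_of_deriv_pos (convex_Icc 0 c) hgc.continuousOn fun t ht => by
      rw [interior_Icc] at ht
      rw [(hderiv t).deriv]
      exact hbefore t ht.1 ht.2
  have hantig : StrictAntiOn g (Set.Ici c) :=
    strictAntiOn_of_deriv_neg (convex_Ici c) hgc.continuousOn fun t ht => by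
      rw [interior_Ici] at ht
      rw [(hderiv t).deriv]
      exact hafter t ht
  refine ⟨c, hc, ?_, fun t ht htc => ?_, fun t ht => ?_, fun t ht => ?_⟩
  · have h : g 0 < g c := hmono ⟨le_rfl, hc.le⟩ ⟨hc.le, le_rfl⟩ hc
    rwa [hg0] at h
  · rcases htc.lt_or_gt with h | h
    · exact hmono ⟨ht.le, h.le⟩ ⟨hc.le, le_rfl⟩ h
    · exact hantig Set.self_mem_Ici h.le h
  · rw [(hderiv t).deriv]
    exact hzero t ht
  · rw [map_smul, smul_eq_mul, mul_eq_zero, or_iff_right ht.ne',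
      and_iff_right (smul_ne_zero ht.ne' hu)]
    exact hzero t ht
end

section
/- Assume (H1), (H3) and (H4). Then Φ(u) > 0 for every u ∈ N; in particular c = inf_{u ∈ N} Φ(u) ≥ 0. -/
/-!
Along the ray through `u`, the function `g t = Φ (t u) - (1 / p) Φ' (t u) (t u)` is continuous on `ℝ`,
vanishes at `0`, and is strictly increasing on `(0, ∞)`; hence `g 1 > 0`. On the Nehari manifold
the derivative term vanishes at `t = 1`, so `g 1 = Φ u`. The bound on the infimum follows at once
(for an empty manifold `sInf ∅ = 0` in `ℝ`).
-/

open Filter Topology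

/-- Under (H1), (H3), (H4), `Φ` is positive on the Nehari manifold `N`;
in particular `c = inf_N Φ ≥ 0`. -/
theorem phi_pos_on_nehari
    {X : Type*} [NormedAddCommGroup X] [NormedSpace ℝ X] [CompleteSpace X]
    (hrefl : Function.Surjective (NormedSpace.inclusionInDoubleDual ℝ X))
    (hnorm : ContDiffOn ℝ 1 (fun x : X => ‖x‖) {(0 : X)}ᶜ)
    (Φ : X → ℝ) (hΦ : ContDiff ℝ 1 Φ) (hΦ0 : Φ 0 = 0)
    (p r : ℝ) (hp : 1 < p) (hr : 1 < r)
    -- (H1)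
    (H1 : ∃ ε > (0 : ℝ), ∃ δ > (0 : ℝ), ∀ u : X, u ≠ 0 → ‖u‖ < δ →
      ε ≤ fderiv ℝ Φ u u / ‖u‖ ^ r)
    -- (H3)
    (H3 : ∀ K : Set X, (0 : X) ∉ K → IsCompact (toWeakSpace ℝ X '' K) →
      ∀ M : ℝ, ∃ T : ℝ, ∀ t ≥ T, ∀ u ∈ K, Φ (t • u) / t ^ p ≤ -M)
    -- (H4)
    (H4 : ∀ u : X, u ≠ 0 →
      StrictAntiOn (fun t : ℝ => fderiv ℝ Φ (t • u) u / t ^ (p - 1)) (Set.Ioi 0) ∧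
      StrictMonoOn (fun t : ℝ => Φ (t • u) - (1 / p) * fderiv ℝ Φ (t • u) (t • u))
        (Set.Ioi 0)) :
    (∀ u : X, u ≠ 0 → fderiv ℝ Φ u u = 0 → 0 < Φ u) ∧
    0 ≤ sInf (Φ '' {u : X | u ≠ 0 ∧ fderiv ℝ Φ u u = 0}) := by
  have pos : ∀ u : X, u ≠ 0 → fderiv ℝ Φ u u = 0 → 0 < Φ u := by
    intro u hu hN
    set g : ℝ → ℝ := fun t => Φ (t • u) - (1 / p) * fderiv ℝ Φ (t • u) (t • u) with hg
    have hmono : StrictMonoOn g (Set.Ioi 0) := (H4 u hu).2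
    have hfd : Continuous (fderiv ℝ Φ) := hΦ.continuous_fderiv one_ne_zero
    have hΦc : Continuous Φ := hΦ.continuous
    have hcont : Continuous g := by
      have h1 : Continuous fun t : ℝ => t • u := by fun_prop
      exact (hΦc.comp h1).sub (continuous_const.mul ((hfd.comp h1).clm_apply h1))
    have h0 : g 0 = 0 := by simp [hg, hΦ0]
    have h1 : g 1 = Φ u := by simp [hg, hN]
    have hlim : Tendsto g (𝓝[>] 0) (𝓝 0) := by
      simpa only [h0] using (hcont.tendsto 0).mono_left nhdsWithin_le_nhds
    -- Strictness needs an intermediate point, since the limit at `0` only yields `0 ≤ g (1 / 2)`.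
    have hhalf : 0 ≤ g (1 / 2) := by
      refine le_of_tendsto hlim ?_
      filter_upwards [Ioc_mem_nhdsGT (show (0 : ℝ) < 1 / 2 by norm_num)] with t ht
      exact hmono.monotoneOn ht.1 (Set.mem_Ioi.2 (by norm_num)) ht.2
    have hlt : g (1 / 2) < g 1 :=
      hmono (Set.mem_Ioi.2 (by norm_num)) (Set.mem_Ioi.2 one_pos) (by norm_num)
    linarith
  refine ⟨pos, Real.sInf_nonneg ?_⟩
  rintro _ ⟨u, ⟨hu, hN⟩, rfl⟩
  exact (pos u hu hN).le
end

section
/- Assume (H1), (H2), (H3) and (H4). If (u_n) is a sequence in the Nehari manifold N such that (Φ(u_n)) is bounded from above, then (u_n) is bounded in X. -/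
/-!
Suppose `(u n)` is unbounded and pass to a subsequence with `‖u n‖ → ∞`. By reflexivity the
normalized sequence `v n = ‖u n‖⁻¹ • u n` has a weakly convergent subsequence, with limit `w` say
(`exists_weak_subseq`). The monotonicity hypothesis on the fibres `t ↦ Φ (t • u)` together with
`Φ' (u n) (u n) = 0` shows that `Φ (u n)` is the maximum of `Φ` on the ray through `u n`
(`le_of_mem_nehari`).

* If `w = 0`, then `Φ (u n) ≥ Φ (t • v n) ≥ C₀ t ^ r - I (t • v n) → C₀ t ^ r - I 0` for every
  `t > 0`, which contradicts the upper bound on `Φ (u n)` for large `t`.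
* If `w ≠ 0`, then `{w} ∪ {v n}` is a weakly compact set avoiding `0`, so `Φ (‖u n‖ • v n) < 0` for
  large `n` by the uniform decay of `Φ (t • ·) / t ^ p`, whereas `Φ (u n) ≥ Φ 0 = 0` by maximality on the ray.

Sequential weak compactness of bounded sets follows from Banach–Alaoglu because the weak closure of
a bounded sequence lies in a separable closed subspace, on which countably many functionals
separate points; a weakly compact subset of such a subspace is metrizable.
-/

open Filter Topology

/-- Countably many continuous functionals separate the points of a separable subspace: take norming
functionals of a dense sequence. -/
lemma exists_countable_separating_functionals {X : Type*} [NormedAddCommGroup X] [NormedSpace ℝ X]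
    (Y : Submodule ℝ X) [TopologicalSpace.SeparableSpace Y] :
    ∃ g : ℕ → X →L[ℝ] ℝ, ∀ x ∈ Y, ∀ y ∈ Y, (∀ n, g n x = g n y) → x = y := by
  choose g hg1 hg2 using fun n : ℕ =>
    exists_dual_vector'' ℝ ((TopologicalSpace.denseSeq Y n : Y) : X)
  refine ⟨g, fun x hx y hy h => ?_⟩
  by_contra hne
  have hpos : 0 < ‖x - y‖ := norm_pos_iff.mpr (sub_ne_zero.mpr hne)
  obtain ⟨n, hn⟩ := (TopologicalSpace.denseRange_denseSeq Y).exists_dist_lt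
    (⟨x - y, Y.sub_mem hx hy⟩ : Y) (half_pos hpos)
  set d : X := ((TopologicalSpace.denseSeq Y n : Y) : X) with hd
  have hn' : ‖x - y - d‖ < ‖x - y‖ / 2 := by
    simpa [Subtype.dist_eq, dist_eq_norm] using hn
  -- The norming functional at `d` kills `x - y`, hence `‖d‖ ≤ ‖d - (x - y)‖`.
  have h1 : ‖d‖ ≤ ‖x - y - d‖ := by
    have h2 : g n (d - (x - y)) = ‖d‖ := by
      have := hg2 n
      simp only [map_sub, h n, sub_self, sub_zero]
      simpa using this
    calc ‖d‖ = g n (d - (x - y)) := h2.symm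
      _ ≤ ‖g n (d - (x - y))‖ := Real.le_norm_self _
      _ ≤ ‖g n‖ * ‖d - (x - y)‖ := (g n).le_opNorm _
      _ ≤ 1 * ‖d - (x - y)‖ := by gcongr; exact hg1 n
      _ = ‖x - y - d‖ := by rw [one_mul, norm_sub_rev]
  have h3 : ‖x - y‖ ≤ ‖x - y - d‖ + ‖d‖ := by
    simpa using norm_add_le (x - y - d) d
  linarith

/-- Bounded sequences in a reflexive space have weakly convergent subsequences. -/
lemma exists_weak_subseq {X : Type*} [NormedAddCommGroup X] [NormedSpace ℝ X]
    (hrefl : Function.Surjective (NormedSpace.inclusionInDoubleDual ℝ X))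
    (v : ℕ → X) (R : ℝ) (hv : ∀ n, ‖v n‖ ≤ R) :
    ∃ (w : X) (φ : ℕ → ℕ), StrictMono φ ∧
      Tendsto (fun n => toWeakSpace ℝ X (v (φ n))) atTop (𝓝 (toWeakSpace ℝ X w)) := by
  set A : Set (WeakSpace ℝ X) := toWeakSpace ℝ X '' Set.range v with hA
  have hK : IsCompact (closure A) := by
    refine NormedSpace.isCompact_closure_of_isBounded ℝ X A ?_ ?_
    · rw [hA, Set.preimage_image_eq _ (toWeakSpace ℝ X).injective]
      refine isBounded_iff_forall_norm_le.mpr ⟨R, ?_⟩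
      rintro _ ⟨n, rfl⟩
      exact hv n
    · rintro ξ -
      obtain ⟨x, hx⟩ := hrefl (WeakDual.toStrongDual ξ)
      exact ⟨toWeakSpace ℝ X x, congrArg StrongDual.toWeakDual hx⟩
  set Y : Submodule ℝ X := (Submodule.span ℝ (Set.range v)).topologicalClosure with hY
  have : TopologicalSpace.SeparableSpace Y := by
    have h : TopologicalSpace.IsSeparable (Y : Set X) := by
      rw [hY, Submodule.topologicalClosure_coe]
      exact ((Set.countable_range v).isSeparable.span).closure
    exact h.separableSpace
  -- A norm-closed subspace is weakly closed, so it contains the weak closure of the sequence.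
  have hsub : closure A ⊆ toWeakSpace ℝ X '' (Y : Set X) := by
    rw [hY, Submodule.topologicalClosure_coe,
      (Submodule.span ℝ (Set.range v)).convex.toWeakSpace_closure (𝕜 := ℝ)]
    exact closure_mono (Set.image_mono Submodule.subset_span)
  obtain ⟨g, hg⟩ := exists_countable_separating_functionals Y
  have : CompactSpace (closure A) := isCompact_iff_compactSpace.mp hK
  have : TopologicalSpace.MetrizableSpace (closure A) := by
    refine Metric.PiNatEmbed.TopologicalSpace.MetrizableSpace.of_countable_separating
      (fun n (k : closure A) => g n ((toWeakSpace ℝ X).symm k)) (fun n => ?_) ?_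
    · exact (WeakBilin.eval_continuous (topDualPairing ℝ X).flip (g n)).comp continuous_subtype_val
    · intro x y hxy
      by_contra! hcon
      obtain ⟨a, ha, hax⟩ := hsub x.2
      obtain ⟨b, hb, hby⟩ := hsub y.2
      refine hxy (Subtype.ext ?_)
      rw [← hax, ← hby]
      refine congrArg _ (hg a ha b hb fun n => ?_)
      simpa [← hax, ← hby] using hcon n
  have hmem : ∀ n, toWeakSpace ℝ X (v n) ∈ closure A := fun n =>
    subset_closure ⟨v n, ⟨n, rfl⟩, rfl⟩
  obtain ⟨a, φ, hφ, hlim⟩ :=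
    CompactSpace.tendsto_subseq (fun n => (⟨_, hmem n⟩ : closure A))
  refine ⟨(toWeakSpace ℝ X).symm a, φ, hφ, ?_⟩
  rw [LinearEquiv.apply_symm_apply]
  exact (continuous_subtype_val.tendsto a).comp hlim

/-- A point of the Nehari manifold maximizes `Φ` on its ray, since the fibre derivative, divided
by `t ^ (p - 1)`, is strictly decreasing and vanishes at `t = 1`. -/
lemma le_of_mem_nehari {X : Type*} [NormedAddCommGroup X] [NormedSpace ℝ X]
    (Φ : X → ℝ) (hΦ : ContDiff ℝ 1 Φ) (p : ℝ) (u : X)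
    (hanti : StrictAntiOn (fun t : ℝ => fderiv ℝ Φ (t • u) u / t ^ (p - 1)) (Set.Ioi 0))
    (hu : fderiv ℝ Φ u u = 0) (s : ℝ) (hs : 0 ≤ s) : Φ (s • u) ≤ Φ u := by
  have hderiv : ∀ t : ℝ, HasDerivAt (fun t : ℝ => Φ (t • u)) (fderiv ℝ Φ (t • u) u) t := by
    intro t
    have h1 : HasDerivAt (fun t : ℝ => t • u) u t := by
      simpa using (hasDerivAt_id t).smul_const u
    exact ((hΦ.differentiable one_ne_zero) (t • u)).hasFDerivAt.comp_hasDerivAt t h1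
  have hcont : Continuous (fun t : ℝ => Φ (t • u)) :=
    hΦ.continuous.comp (continuous_id.smul continuous_const)
  have hone : fderiv ℝ Φ ((1 : ℝ) • u) u / (1 : ℝ) ^ (p - 1) = 0 := by simp [hu]
  rcases le_total s 1 with h | h
  · have hmono : MonotoneOn (fun t : ℝ => Φ (t • u)) (Set.Icc 0 1) := by
      refine monotoneOn_of_deriv_nonneg (convex_Icc 0 1) hcont.continuousOn
        (fun t _ => (hderiv t).differentiableAt.differentiableWithinAt) fun t ht => ?_
      rw [interior_Icc] at ht
      rw [(hderiv t).deriv]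
      have h2 := hanti (Set.mem_Ioi.mpr ht.1) (Set.mem_Ioi.mpr one_pos) ht.2
      simp only [hone] at h2
      exact ((div_pos_iff_of_pos_right (Real.rpow_pos_of_pos ht.1 _)).mp h2).le
    simpa using hmono ⟨hs, h⟩ ⟨zero_le_one, le_rfl⟩ h
  · have hmono : AntitoneOn (fun t : ℝ => Φ (t • u)) (Set.Ici 1) := by
      refine antitoneOn_of_deriv_nonpos (convex_Ici 1) hcont.continuousOn
        (fun t _ => (hderiv t).differentiableAt.differentiableWithinAt) fun t ht => ?_
      rw [interior_Ici] at ht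
      have ht0 : (0 : ℝ) < t := one_pos.trans ht
      rw [(hderiv t).deriv]
      have h2 := hanti (Set.mem_Ioi.mpr one_pos) (Set.mem_Ioi.mpr ht0) ht
      simp only [hone] at h2
      by_contra! hcon
      exact absurd h2 (div_pos hcon (Real.rpow_pos_of_pos ht0 _)).not_gt
    simpa using hmono (Set.mem_Ici.mpr le_rfl) (Set.mem_Ici.mpr h) h

/-- Under (H1)–(H4), every sequence in the Nehari manifold along which `Φ` is
bounded from above is bounded in `X`. -/
theorem nehari_seq_bounded
    {X : Type*} [NormedAddCommGroup X] [NormedSpace ℝ X] [CompleteSpace X]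
    (hrefl : Function.Surjective (NormedSpace.inclusionInDoubleDual ℝ X))
    (hnorm : ContDiffOn ℝ 1 (fun x : X => ‖x‖) {(0 : X)}ᶜ)
    (Φ : X → ℝ) (hΦ : ContDiff ℝ 1 Φ) (hΦ0 : Φ 0 = 0)
    (p r : ℝ) (hp : 1 < p) (hr : 1 < r)
    -- (H1)
    (H1 : ∃ ε > (0 : ℝ), ∃ δ > (0 : ℝ), ∀ u : X, u ≠ 0 → ‖u‖ < δ →
      ε ≤ fderiv ℝ Φ u u / ‖u‖ ^ r)
    -- (H2)
    (H2 : ∃ C₀ > (0 : ℝ), ∃ I : X → ℝ,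
      (∀ (v : ℕ → X) (u : X),
        (∀ φ : X →L[ℝ] ℝ, Tendsto (fun n => φ (v n)) atTop (𝓝 (φ u))) →
        Tendsto (fun n => I (v n)) atTop (𝓝 (I u))) ∧
      ∀ u : X, C₀ * ‖u‖ ^ r - I u ≤ Φ u)
    -- (H3)
    (H3 : ∀ K : Set X, (0 : X) ∉ K → IsCompact (toWeakSpace ℝ X '' K) →
      ∀ M : ℝ, ∃ T : ℝ, ∀ t ≥ T, ∀ u ∈ K, Φ (t • u) / t ^ p ≤ -M)
    -- (H4)
    (H4 : ∀ u : X, u ≠ 0 →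
      StrictAntiOn (fun t : ℝ => fderiv ℝ Φ (t • u) u / t ^ (p - 1)) (Set.Ioi 0) ∧
      StrictMonoOn (fun t : ℝ => Φ (t • u) - (1 / p) * fderiv ℝ Φ (t • u) (t • u))
        (Set.Ioi 0))
    (u : ℕ → X) (hu : ∀ n, u n ≠ 0 ∧ fderiv ℝ Φ (u n) (u n) = 0)
    (hbd : ∃ M : ℝ, ∀ n, Φ (u n) ≤ M) :
    ∃ C : ℝ, ∀ n, ‖u n‖ ≤ C := by
  obtain ⟨M, hM⟩ := hbd
  by_contra! hunb
  -- A sequence of indices along which the norm tends to infinity; it need not be monotone.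
  choose k hk using fun n : ℕ => hunb n
  set v : ℕ → X := fun n => ‖u (k n)‖⁻¹ • u (k n) with hv
  have hpos : ∀ n, 0 < ‖u (k n)‖ := fun n => norm_pos_iff.mpr (hu _).1
  have hv1 : ∀ n, ‖v n‖ = 1 := fun n => by
    simp [hv, norm_smul, (hpos n).ne']
  have huv : ∀ n, ‖u (k n)‖ • v n = u (k n) := fun n => by
    simp [hv, smul_smul, (hpos n).ne']
  have hmax : ∀ n (s : ℝ), 0 ≤ s → Φ (s • u (k n)) ≤ Φ (u (k n)) := fun n s hs =>
    le_of_mem_nehari Φ hΦ p _ (H4 _ (hu _).1).1 (hu _).2 s hs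
  obtain ⟨w, φ, hφ, hlim⟩ := exists_weak_subseq hrefl v 1 fun n => (hv1 n).le
  by_cases hw : w = 0
  · obtain ⟨C₀, hC₀, I, hI, hlow⟩ := H2
    have hbound : ∀ t : ℝ, 0 < t → C₀ * t ^ r ≤ M + I 0 := by
      intro t ht
      have hIt : Tendsto (fun n => I (t • v (φ n))) atTop (𝓝 (I 0)) := by
        refine hI _ _ fun ψ => ?_
        have h1 : Tendsto (fun n => ψ (v (φ n))) atTop (𝓝 (ψ w)) :=
          ((WeakBilin.eval_continuous (topDualPairing ℝ X).flip ψ).tendsto _).comp hlim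
        simpa [hw] using h1.const_mul t
      refine ge_of_tendsto' (hIt.const_add M) fun n => ?_
      have h1 := hlow (t • v (φ n))
      have h2 : Φ (t • v (φ n)) ≤ Φ (u (k (φ n))) := by
        simp only [hv, smul_smul]
        exact hmax _ _ (mul_nonneg ht.le (inv_nonneg.mpr (hpos _).le))
      have h3 : ‖t • v (φ n)‖ = t := by
        rw [norm_smul, hv1, mul_one, Real.norm_of_nonneg ht.le]
      rw [h3] at h1
      linarith [hM (k (φ n))]
    have hgrow : Tendsto (fun t : ℝ => C₀ * t ^ r) atTop atTop :=
      (tendsto_rpow_atTop (by linarith)).const_mul_atTop hC₀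
    obtain ⟨t, ht, ht0⟩ :=
      ((hgrow.eventually_gt_atTop (M + I 0)).and (eventually_gt_atTop 0)).exists
    exact absurd (hbound t ht0) ht.not_ge
  · obtain ⟨T, hT⟩ := H3 (insert w (Set.range fun n => v (φ n)))
      (by
        rintro (h | ⟨n, h⟩)
        · exact hw h.symm
        · have := hv1 (φ n)
          simp_all)
      (by
        rw [Set.image_insert_eq, ← Set.range_comp]
        exact hlim.isCompact_insert_range) 1
    obtain ⟨n, hn⟩ := exists_nat_ge T
    have hbig : T ≤ ‖u (k (φ n))‖ :=
      hn.trans ((Nat.cast_le.mpr hφ.le_apply).trans (hk (φ n)).le)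
    have h1 := hT _ hbig (v (φ n)) (Or.inr ⟨n, rfl⟩)
    rw [huv] at h1
    have h2 : 0 ≤ Φ (u (k (φ n))) := by
      simpa [hΦ0] using hmax (φ n) 0 le_rfl
    have h3 : 0 ≤ Φ (u (k (φ n))) / ‖u (k (φ n))‖ ^ p := by positivity
    linarith
end

section
/- Assume (H1), (H2), (H3) and (H4). If (u_n) is a sequence in the Nehari manifold N such that (Φ(u_n)) is bounded from above and u_n converges weakly to u₀ in X, then u₀ ≠ 0. -/
/-!
Membership in the Nehari manifold together with the strict decrease of `t ↦ Φ'(tu)u / t^{p-1}`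
makes `t = 1` a maximum of `t ↦ Φ(tu)` on `(0, ∞)` (`le_of_strictAntiOn_fderiv_div_rpow`).
By (H1) the manifold stays at a distance `δ > 0` from the origin. If `u n ⇀ 0`, then the normalized
vectors `v n = u n / ‖u n‖` also converge weakly to `0`, so for every `s > 0`
`M ≥ Φ(u n) ≥ Φ(s v n) ≥ C₀ s^r - I(s v n) → C₀ s^r - I 0`, which is impossible for large `s`.
-/

open Filter Topology

/-- On each ray, a critical point is a global maximum: the derivative `Φ'(tu)u` along the ray
has the sign of `1 - t`. -/
theorem le_of_strictAntiOn_fderiv_div_rpow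
    {X : Type*} [NormedAddCommGroup X] [NormedSpace ℝ X]
    {Φ : X → ℝ} (hΦ : Differentiable ℝ Φ) {p : ℝ} {u : X}
    (hanti : StrictAntiOn (fun t : ℝ => fderiv ℝ Φ (t • u) u / t ^ (p - 1)) (Set.Ioi 0))
    (hu : fderiv ℝ Φ u u = 0) {t : ℝ} (ht : 0 < t) : Φ (t • u) ≤ Φ u := by
  have hd : ∀ s : ℝ, HasDerivAt (fun s : ℝ => Φ (s • u)) (fderiv ℝ Φ (s • u) u) s := by
    intro s
    have h1 : HasDerivAt (fun s : ℝ => s • u) u s := by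
      simpa using (hasDerivAt_id s).smul_const u
    exact (hΦ (s • u)).hasFDerivAt.comp_hasDerivAt s h1
  have hcont : Continuous (fun s : ℝ => Φ (s • u)) :=
    continuous_iff_continuousAt.2 fun s => (hd s).continuousAt
  have hdiff : Differentiable ℝ (fun s : ℝ => Φ (s • u)) := fun s => (hd s).differentiableAt
  rcases le_total t 1 with h | h
  · have hm : MonotoneOn (fun s : ℝ => Φ (s • u)) (Set.Icc t 1) := by
      refine monotoneOn_of_deriv_nonneg (convex_Icc t 1) hcont.continuousOn
        hdiff.differentiableOn ?_
      intro s hs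
      rw [interior_Icc] at hs
      have hs0 : 0 < s := ht.trans hs.1
      have := hanti (Set.mem_Ioi.2 hs0) (Set.mem_Ioi.2 one_pos) hs.2
      simp only [one_smul, hu, zero_div] at this
      rw [(hd s).deriv]
      exact ((div_pos_iff_of_pos_right (Real.rpow_pos_of_pos hs0 _)).1 this).le
    simpa using hm (Set.left_mem_Icc.2 h) (Set.right_mem_Icc.2 h) h
  · have hm : AntitoneOn (fun s : ℝ => Φ (s • u)) (Set.Icc 1 t) := by
      refine antitoneOn_of_deriv_nonpos (convex_Icc 1 t) hcont.continuousOn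
        hdiff.differentiableOn ?_
      intro s hs
      rw [interior_Icc] at hs
      have hs0 : 0 < s := one_pos.trans hs.1
      have := hanti (Set.mem_Ioi.2 one_pos) (Set.mem_Ioi.2 hs0) hs.1
      simp only [one_smul, hu, zero_div] at this
      rw [(hd s).deriv]
      by_contra! hc
      exact absurd this (not_lt.2 (div_pos hc (Real.rpow_pos_of_pos hs0 _)).le)
    simpa using hm (Set.left_mem_Icc.2 h) (Set.right_mem_Icc.2 h) h

/-- Under (H1)–(H4), if a sequence in the Nehari manifold has `Φ`-values bounded
from above and converges weakly to `u₀`, then `u₀ ≠ 0`. -/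
theorem nehari_weak_limit_ne_zero
    {X : Type*} [NormedAddCommGroup X] [NormedSpace ℝ X] [CompleteSpace X]
    (hrefl : Function.Surjective (NormedSpace.inclusionInDoubleDual ℝ X))
    (hnorm : ContDiffOn ℝ 1 (fun x : X => ‖x‖) {(0 : X)}ᶜ)
    (Φ : X → ℝ) (hΦ : ContDiff ℝ 1 Φ) (hΦ0 : Φ 0 = 0)
    (p r : ℝ) (hp : 1 < p) (hr : 1 < r)
    -- (H1)
    (H1 : ∃ ε > (0 : ℝ), ∃ δ > (0 : ℝ), ∀ u : X, u ≠ 0 → ‖u‖ < δ →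
      ε ≤ fderiv ℝ Φ u u / ‖u‖ ^ r)
    -- (H2)
    (H2 : ∃ C₀ > (0 : ℝ), ∃ I : X → ℝ,
      (∀ (v : ℕ → X) (u : X),
        (∀ φ : X →L[ℝ] ℝ, Tendsto (fun n => φ (v n)) atTop (𝓝 (φ u))) →
        Tendsto (fun n => I (v n)) atTop (𝓝 (I u))) ∧
      ∀ u : X, C₀ * ‖u‖ ^ r - I u ≤ Φ u)
    -- (H3)
    (H3 : ∀ K : Set X, (0 : X) ∉ K → IsCompact (toWeakSpace ℝ X '' K) →
      ∀ M : ℝ, ∃ T : ℝ, ∀ t ≥ T, ∀ u ∈ K, Φ (t • u) / t ^ p ≤ -M)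
    -- (H4)
    (H4 : ∀ u : X, u ≠ 0 →
      StrictAntiOn (fun t : ℝ => fderiv ℝ Φ (t • u) u / t ^ (p - 1)) (Set.Ioi 0) ∧
      StrictMonoOn (fun t : ℝ => Φ (t • u) - (1 / p) * fderiv ℝ Φ (t • u) (t • u))
        (Set.Ioi 0))
    (u : ℕ → X) (hu : ∀ n, u n ≠ 0 ∧ fderiv ℝ Φ (u n) (u n) = 0)
    (hbd : ∃ M : ℝ, ∀ n, Φ (u n) ≤ M)
    (u₀ : X)
    (hweak : ∀ φ : X →L[ℝ] ℝ, Tendsto (fun n => φ (u n)) atTop (𝓝 (φ u₀))) :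
    u₀ ≠ 0 := by
  rintro rfl
  obtain ⟨ε, hε, δ, hδ, H1⟩ := H1
  obtain ⟨C₀, hC, I, hI, hlow⟩ := H2
  obtain ⟨M, hM⟩ := hbd
  have hnu : ∀ n, δ ≤ ‖u n‖ := by
    intro n
    by_contra! h
    have := H1 (u n) (hu n).1 h
    rw [(hu n).2, zero_div] at this
    linarith
  have key : ∀ s : ℝ, 0 < s → C₀ * s ^ r - I 0 ≤ M := by
    intro s hs
    have hw : ∀ φ : X →L[ℝ] ℝ,
        Tendsto (fun n => φ ((s / ‖u n‖) • u n)) atTop (𝓝 (φ 0)) := by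
      intro φ
      have h0 := (hweak φ).abs.const_mul (s / δ)
      simp only [map_zero, abs_zero, mul_zero] at h0 ⊢
      refine squeeze_zero_norm (fun n => ?_) h0
      rw [map_smul, smul_eq_mul, norm_mul, Real.norm_eq_abs, Real.norm_eq_abs,
        abs_of_nonneg (by positivity)]
      gcongr
      exact hnu n
    refine le_of_tendsto ((hI _ _ hw).const_sub (C₀ * s ^ r)) (Eventually.of_forall fun n => ?_)
    have hpos : 0 < ‖u n‖ := hδ.trans_le (hnu n)
    have hnorm_eq : ‖(s / ‖u n‖) • u n‖ = s := by
      rw [norm_smul, Real.norm_eq_abs, abs_of_pos (div_pos hs hpos), div_mul_cancel₀ _ hpos.ne']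
    have h1 := hlow ((s / ‖u n‖) • u n)
    rw [hnorm_eq] at h1
    exact h1.trans ((le_of_strictAntiOn_fderiv_div_rpow (hΦ.differentiable one_ne_zero)
      (H4 (u n) (hu n).1).1 (hu n).2 (div_pos hs hpos)).trans (hM n))
  have hlim : Tendsto (fun s : ℝ => C₀ * s ^ r) atTop atTop :=
    (tendsto_rpow_atTop (by linarith)).const_mul_atTop hC
  obtain ⟨s, hs1, hs0⟩ :=
    ((hlim.eventually_gt_atTop (M + I 0)).and (eventually_gt_atTop 0)).exists
  linarith [key s hs0]
end

section
/- Let p > 1 and let f : [0,∞) → ℝ be continuous with f(0) = 0 and such that the map t ↦ f(t)/t^{p−1} is strictly increasing on (0,∞). Define F(t) = ∫₀^t f(s) ds. Then the map t ↦ (1/p)·f(t)·t − F(t) is strictly increasing on (0,∞). -/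
/-!
Write `g t = f t / t ^ (p - 1)` and let `0 < a < b`. On `[a, b]` monotonicity of `g` gives
`f s ≤ g b * s ^ (p - 1)`, hence `∫ₐᵇ f ≤ g b * (b ^ p - a ^ p) / p`. Since `f t * t = g t * t ^ p`,
the increment of `(1 / p) f(t) t - F(t)` from `a` to `b` is at least
`(g b - g a) * a ^ p / p`, which is positive because `g` is strictly increasing.
-/

open Filter Topology intervalIntegral

/-- If `f` is continuous on `[0,∞)` with `f(0) = 0` and `t ↦ f(t)/t^{p-1}` is
strictly increasing on `(0,∞)` (`p > 1`), then `t ↦ (1/p) f(t) t − F(t)` is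
strictly increasing on `(0,∞)`, where `F(t) = ∫₀^t f`. -/
theorem nehari_fiber_term_strictMono
    (p : ℝ) (hp : 1 < p)
    (f : ℝ → ℝ) (hf : ContinuousOn f (Set.Ici 0)) (hf0 : f 0 = 0)
    (hmono : StrictMonoOn (fun t : ℝ => f t / t ^ (p - 1)) (Set.Ioi 0)) :
    StrictMonoOn (fun t : ℝ => (1 / p) * f t * t - ∫ s in (0 : ℝ)..t, f s)
      (Set.Ioi 0) := by
  intro a ha b hb hab
  have ha' : 0 < a := ha
  have hb' : 0 < b := hb
  have hp0 : 0 < p := by linarith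
  have key : ∀ t : ℝ, 0 < t → f t = f t / t ^ (p - 1) * t ^ (p - 1) := fun t ht =>
    (div_mul_cancel₀ _ (Real.rpow_pos_of_pos ht _).ne').symm
  have hpow : ∀ t : ℝ, 0 < t → t ^ (p - 1) * t = t ^ p := fun t ht => by
    rw [← Real.rpow_add_one ht.ne', sub_add_cancel]
  have hint : ∀ x y : ℝ, 0 ≤ x → 0 ≤ y → IntervalIntegrable f MeasureTheory.volume x y :=
    fun x y hx hy => (hf.mono fun z hz => (le_min hx hy).trans hz.1).intervalIntegrable
  have hsplit : (∫ s in (0 : ℝ)..a, f s) + ∫ s in a..b, f s = ∫ s in (0 : ℝ)..b, f s :=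
    integral_add_adjacent_intervals (hint 0 a le_rfl ha'.le) (hint a b ha'.le hb'.le)
  have hle : ∫ s in a..b, f s ≤ ∫ s in a..b, f b / b ^ (p - 1) * s ^ (p - 1) := by
    refine integral_mono_on hab.le (hint a b ha'.le hb'.le)
      ((intervalIntegrable_rpow' (by linarith)).const_mul _) fun s hs => ?_
    have hs0 : 0 < s := ha'.trans_le hs.1
    have hg : f s / s ^ (p - 1) ≤ f b / b ^ (p - 1) := hmono.monotoneOn hs0 hb hs.2
    rw [key s hs0]
    exact mul_le_mul_of_nonneg_right hg (Real.rpow_nonneg hs0.le _)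
  rw [integral_const_mul, integral_rpow (Or.inl (by linarith)), sub_add_cancel] at hle
  have hlt : f a / a ^ (p - 1) < f b / b ^ (p - 1) := hmono ha hb hab
  have hfa : f a * a = f a / a ^ (p - 1) * a ^ p := by
    rw [← hpow a ha', ← mul_assoc, ← key a ha']
  have hfb : f b * b = f b / b ^ (p - 1) * b ^ p := by
    rw [← hpow b hb', ← mul_assoc, ← key b hb']
  have hgain : 0 < (f b / b ^ (p - 1) - f a / a ^ (p - 1)) * a ^ p / p :=
    div_pos (mul_pos (sub_pos.2 hlt) (Real.rpow_pos_of_pos ha' _)) hp0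
  change 1 / p * f a * a - _ < 1 / p * f b * b - _
  rw [mul_assoc, mul_assoc, hfa, hfb, ← hsplit]
  -- The lower bound for the increment is `hgain`, by pure algebra.
  have halg : 1 / p * (f b / b ^ (p - 1) * b ^ p) - 1 / p * (f a / a ^ (p - 1) * a ^ p)
      - f b / b ^ (p - 1) * ((b ^ p - a ^ p) / p)
      = (f b / b ^ (p - 1) - f a / a ^ (p - 1)) * a ^ p / p := by
    ring
  linarith
end
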